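/- arXiv:1902.09599 — 5 statements merged into one kernel-verified Lean document; each statement's English description precedes it below -/
import Mathlib

section
/- For any mask distribution q on M, any two fill-in values τ, τ' ∈ P, and any x : I → ℝ, one has T_{q,τ} x = 0 if and only if T_{q,τ'} x = 0; that is, all the transition operators T_{q,τ}, τ ∈ P, have the same null space. -/
/-!
Masking operators compose by intersecting masks, `f_τ(·, a) ∘ f_τ(·, m) = f_τ(·, a ⊓ m)`, so their
pushforwards `F m` satisfy `F (a ⊓ m) = F a * F m`, and `T q τ` is the nonnegative combination
`∑ m, q m • F m`. If it kills `x`, then so does every `F a` with `a` below a mask of positive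
weight: in `0 = F a (∑ m, q m • F m x) = ∑ m, q m • F (a ⊓ m) x` the terms with `a ⊓ m < a` vanish
by induction, and what is left is `F a x` times the positive total weight of the masks above `a`.
Hence the null space of `T q τ` is the intersection of those of the `F m` with `q m ≠ 0`. None of
these depends on `τ`, because `f_τ'(·, m) ∘ f_τ(·, m) = f_τ'(·, m)`.
-/

open Finset
open scoped Classical

/-- The transition operator `T_{q,τ}`: for a mask distribution `q` on masks
`Fin n → Bool`, a fill-in value `τ`, and `x : (Fin n → P) → ℝ`,
`(T q τ x) v = ∑_{m} ∑_{u} q m * x u * [f_τ(u, m) = v]`, where the masking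
operator is `f_τ(u,m) d = if m d then u d else τ`. -/
noncomputable def T {n : ℕ} {P : Type*} [Fintype P] [DecidableEq P]
    (q : (Fin n → Bool) → ℝ) (τ : P) (x : (Fin n → P) → ℝ) : (Fin n → P) → ℝ :=
  fun v => ∑ m : Fin n → Bool, ∑ u : Fin n → P,
    q m * x u * (if (fun d => if m d then u d else τ) = v then (1 : ℝ) else 0)

/-- The marginal `x([v]_m) = ∑_{u ∈ [v]_m} x u`, where `u ∈ [v]_m` iff
`u` agrees with `v` on every coordinate observed by the mask `m`. -/
noncomputable def marg {n : ℕ} {P : Type*} [Fintype P] [DecidableEq P]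
    (x : (Fin n → P) → ℝ) (m : Fin n → Bool) (v : Fin n → P) : ℝ :=
  ∑ u : Fin n → P, if (∀ d, m d = true → v d = u d) then x u else 0

section InfRepresentation

variable {L R V : Type*} [SemilatticeInf L] [Semiring R] [PartialOrder R] [IsOrderedAddMonoid R]
  [IsCancelMulZero R] [AddCommMonoid V] [Module R V] [Module.IsTorsionFree R V]

theorem card_filter_not_inf_le_lt {s : Finset L} {a m : L} (hm : m ∈ s) (ham : ¬a ≤ m) :
    #{b ∈ s | ¬a ⊓ m ≤ b} < #{b ∈ s | ¬a ≤ b} := by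
  refine card_lt_card (ssubset_iff_of_subset ?_ |>.mpr ⟨m, ?_, ?_⟩)
  · exact monotone_filter_right s fun b _ hb hab => hb (inf_le_left.trans hab)
  · exact mem_filter.mpr ⟨hm, ham⟩
  · exact fun h => (mem_filter.mp h).2 inf_le_right

-- Induction on the number of members of `s` not above `a`, as `<` on `L` may be ill-founded.
theorem apply_eq_zero_of_sum_smul_apply_eq_zero {F : L → Module.End R V}
    (hF : ∀ a b, F (a ⊓ b) = F a * F b) {s : Finset L} {q : L → R} (hq : ∀ m ∈ s, 0 ≤ q m)
    {x : V} (hx : ∑ m ∈ s, q m • F m x = 0) {m₀ : L} (hm₀ : m₀ ∈ s) (hqm₀ : q m₀ ≠ 0)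
    (a : L) (ha : a ≤ m₀) : F a x = 0 := by
  have hlower : ∀ m ∈ s, ¬a ≤ m → F (a ⊓ m) x = 0 := fun m hm ham =>
    have := card_filter_not_inf_le_lt hm ham
    apply_eq_zero_of_sum_smul_apply_eq_zero hF hq hx hm₀ hqm₀ (a ⊓ m) (inf_le_left.trans ha)
  have hsum : (∑ m ∈ s with a ≤ m, q m) • F a x = 0 := calc
    _ = ∑ m ∈ s with a ≤ m, q m • F (a ⊓ m) x := by
      rw [sum_smul]
      exact sum_congr rfl fun m hm => by rw [inf_eq_left.mpr (mem_filter.mp hm).2]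
    _ = ∑ m ∈ s, q m • F (a ⊓ m) x := sum_filter_of_ne fun m hm hne => by
      by_contra ham
      exact hne (by rw [hlower m hm ham, smul_zero])
    _ = F a (∑ m ∈ s, q m • F m x) := by simp [hF]
    _ = 0 := by rw [hx, map_zero]
  have hweight : ∑ m ∈ s with a ≤ m, q m ≠ 0 := fun h =>
    hqm₀ <| (sum_eq_zero_iff_of_nonneg fun m hm => hq m (mem_of_mem_filter m hm)).mp h m₀
      (mem_filter.mpr ⟨hm₀, ha⟩)
  exact (smul_eq_zero_iff_right hweight).mp hsum
termination_by #{b ∈ s | ¬a ≤ b}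

theorem sum_smul_apply_eq_zero_iff {F : L → Module.End R V}
    (hF : ∀ a b, F (a ⊓ b) = F a * F b) {s : Finset L} {q : L → R} (hq : ∀ m ∈ s, 0 ≤ q m)
    {x : V} : ∑ m ∈ s, q m • F m x = 0 ↔ ∀ m ∈ s, q m ≠ 0 → F m x = 0 := by
  refine ⟨fun hx m hm hqm =>
    apply_eq_zero_of_sum_smul_apply_eq_zero hF hq hx hm hqm m le_rfl, fun h => ?_⟩
  refine sum_eq_zero fun m hm => ?_
  by_cases hqm : q m = 0
  · rw [hqm, zero_smul]
  · rw [h m hm hqm, smul_zero]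

end InfRepresentation

section Masking

variable {ι : Type*} {P : ι → Type*}

/-- The masking operator `f_τ(·, m)`, which hides the coordinates where `m` is `false`. The fill-in
value and the set of feature values are allowed to depend on the coordinate. -/
def maskFill (τ : ∀ i, P i) (m : ι → Bool) (u : ∀ i, P i) : ∀ i, P i :=
  fun i => if m i then u i else τ i

theorem maskFill_inf (τ : ∀ i, P i) (a m : ι → Bool) :
    maskFill τ (a ⊓ m) = maskFill τ a ∘ maskFill τ m := by
  funext u i
  cases ha : a i <;> simp [maskFill, ha]

theorem maskFill_comp_maskFill_self (τ τ' : ∀ i, P i) (m : ι → Bool) :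
    maskFill τ' m ∘ maskFill τ m = maskFill τ' m := by
  funext u i
  cases hm : m i <;> simp [maskFill, hm]

theorem mapDomain_maskFill_eq_zero_iff {V : Type*} [AddCommMonoid V] (τ τ' : ∀ i, P i)
    (m : ι → Bool) (x : (∀ i, P i) →₀ V) :
    x.mapDomain (maskFill τ m) = 0 ↔ x.mapDomain (maskFill τ' m) = 0 := by
  have transfer {σ σ' : ∀ i, P i} (h : x.mapDomain (maskFill σ m) = 0) :
      x.mapDomain (maskFill σ' m) = 0 := by
    rw [← maskFill_comp_maskFill_self σ σ' m, Finsupp.mapDomain_comp, h, Finsupp.mapDomain_zero]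
  exact ⟨transfer, transfer⟩

variable {R V : Type*} [Semiring R] [PartialOrder R] [IsOrderedAddMonoid R] [IsCancelMulZero R]
  [AddCommMonoid V] [Module R V] [Module.IsTorsionFree R V]

theorem sum_smul_mapDomain_maskFill_eq_zero_iff {s : Finset (ι → Bool)} {q : (ι → Bool) → R}
    (hq : ∀ m ∈ s, 0 ≤ q m) (τ : ∀ i, P i) (x : (∀ i, P i) →₀ V) :
    ∑ m ∈ s, q m • x.mapDomain (maskFill τ m) = 0 ↔
      ∀ m ∈ s, q m ≠ 0 → x.mapDomain (maskFill τ m) = 0 := by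
  refine sum_smul_apply_eq_zero_iff (F := fun m => Finsupp.lmapDomain V R (maskFill τ m))
    (fun a m => ?_) hq
  rw [maskFill_inf, Finsupp.lmapDomain_comp, Module.End.mul_eq_comp]

theorem stmt0_general {s : Finset (ι → Bool)} {q : (ι → Bool) → R} (hq : ∀ m ∈ s, 0 ≤ q m)
    (τ τ' : ∀ i, P i) (x : (∀ i, P i) →₀ V) :
    ∑ m ∈ s, q m • x.mapDomain (maskFill τ m) = 0 ↔
      ∑ m ∈ s, q m • x.mapDomain (maskFill τ' m) = 0 := by
  simp only [sum_smul_mapDomain_maskFill_eq_zero_iff hq, mapDomain_maskFill_eq_zero_iff τ τ']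

end Masking

theorem T_eq_sum_smul_mapDomain {n : ℕ} {P : Type*} [Fintype P] [DecidableEq P]
    (q : (Fin n → Bool) → ℝ) (τ : P) (x : (Fin n → P) → ℝ) :
    T q τ x = ⇑(∑ m, q m •
      (Finsupp.equivFunOnFinite.symm x).mapDomain (maskFill (fun _ => τ) m)) := by
  funext v
  have hpush (m : Fin n → Bool) :
      (Finsupp.equivFunOnFinite.symm x).mapDomain (maskFill (fun _ => τ) m) v =
        ∑ u with maskFill (fun _ => τ) m u = v, x u :=
    FunOnFinite.map_apply_apply _ x v
  simp only [T, Finsupp.finsetSum_apply, Finsupp.smul_apply, smul_eq_mul, hpush, sum_filter,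
    mul_sum, mul_ite, mul_one, mul_zero]
  rfl

/-- All transition operators `T_{q,τ}`, `τ ∈ P`, have the same null space. -/
theorem stmt0 {n : ℕ} (hn : 1 ≤ n) {P : Type*} [Fintype P] [Nonempty P] [DecidableEq P]
    (q : (Fin n → Bool) → ℝ) (hq0 : ∀ m, 0 ≤ q m)
    (hq1 : (∑ m : Fin n → Bool, q m) = 1)
    (τ τ' : P) (x : (Fin n → P) → ℝ) :
    T q τ x = 0 ↔ T q τ' x = 0 := by
  simpa only [T_eq_sum_smul_mapDomain, Finsupp.coe_eq_zero] using
    stmt0_general (fun m _ => hq0 m) (fun _ => τ) (fun _ => τ') (Finsupp.equivFunOnFinite.symm x)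
end

section
/- For any mask distribution q on M, any τ₀, τ ∈ P, and any x₁, x₂ : I → ℝ, if T_{q,τ₀} x₁ = T_{q,τ₀} x₂ then T_{q,τ} x₁ = T_{q,τ} x₂. -/
/-!
The pushforwards `E_m` along the masking maps `f_τ(·, m)` are commuting idempotents, and
`T_{q,τ} = ∑ m, q m • E_m`. Commuting idempotents behave like simultaneously diagonal matrices with
entries in `{0, 1}`, so a combination with positive weights kills `x` only if each of them does.
Hence the kernel of `T_{q,τ}` is the intersection of the kernels of the `E_m` with `q m > 0`. Since
`f_τ(·, m) ∘ f_τ₀(·, m) = f_τ(·, m)`, the kernel of each `E_m` is the same for all fill-in values.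
-/

open Finset
open scoped Classical

section CommutingIdempotents

variable {R V κ : Type*} [CommRing R] [LinearOrder R] [IsStrictOrderedRing R]
  [AddCommGroup V] [Module R V] [Module.IsTorsionFree R V]
  {e : κ → Module.End R V} {s : Finset κ} {q : κ → R}

lemma eq_zero_of_smul_add_sum_smul_apply_eq_zero (he : ∀ i, IsIdempotentElem (e i))
    (hcomm : ∀ i j, Commute (e i) (e j)) (hq : ∀ i ∈ s, 0 ≤ q i) {c : R} (hc : 0 < c) {x : V}
    (hx : c • x + ∑ i ∈ s, q i • e i x = 0) : x = 0 := by
  induction s using Finset.induction_on generalizing c x with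
  | empty => simpa [hc.ne'] using hx
  | insert a s ha ih =>
    obtain ⟨hqa, hqs⟩ := (Finset.forall_mem_insert ..).mp hq
    rw [Finset.sum_insert ha] at hx
    have hax : e a x = 0 := by
      -- On the image of `e a` the operator `e a` is the identity, so its weight joins `c`.
      refine ih hqs (add_pos_of_pos_of_nonneg hc hqa) ?_
      have hidem : e a (e a x) = e a x := LinearMap.congr_fun (he a) x
      have hswap (i) : e a (e i x) = e i (e a x) := LinearMap.congr_fun (hcomm a i) x
      simpa only [map_add, map_sum, map_smul, map_zero, hidem, hswap, ← add_assoc, ← add_smul]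
        using congrArg (e a) hx
    exact ih hqs hc (by simpa only [hax, smul_zero, zero_add] using hx)

lemma ker_sum_smul_eq_iInf_ker (he : ∀ i, IsIdempotentElem (e i))
    (hcomm : ∀ i j, Commute (e i) (e j)) (hq : ∀ i ∈ s, 0 < q i) :
    (∑ i ∈ s, q i • e i).ker = ⨅ i ∈ s, (e i).ker := by
  ext x
  simp only [Submodule.mem_iInf, LinearMap.mem_ker, LinearMap.sum_apply, LinearMap.smul_apply]
  refine ⟨fun hx j hj => ?_, fun hx => Finset.sum_eq_zero fun i hi => by rw [hx i hi, smul_zero]⟩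
  have hidem : e j (e j x) = e j x := LinearMap.congr_fun (he j) x
  have hswap (i) : e j (e i x) = e i (e j x) := LinearMap.congr_fun (hcomm j i) x
  refine eq_zero_of_smul_add_sum_smul_apply_eq_zero he hcomm (s := s.erase j)
    (fun i hi => (hq i (Finset.mem_of_mem_erase hi)).le) (hq j hj) ?_
  calc q j • e j x + ∑ i ∈ s.erase j, q i • e i (e j x)
      = ∑ i ∈ s, q i • e i (e j x) := by
        rw [← Finset.add_sum_erase s (fun i => q i • e i (e j x)) hj, hidem]
    _ = e j (∑ i ∈ s, q i • e i x) := by simp only [map_sum, map_smul, hswap]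
    _ = 0 := by rw [hx, map_zero]

end CommutingIdempotents

section Masking

variable {ι : Type*} {P : ι → Type*}

/-- The masking operator `f_τ(·, m)`, with a fill-in value `τ i` for each coordinate `i`. -/
def fill (τ : ∀ i, P i) (m : ι → Bool) (u : ∀ i, P i) : ∀ i, P i :=
  fun i => if m i then u i else τ i

lemma fill_comp_fill_self (τ τ₀ : ∀ i, P i) (m : ι → Bool) :
    fill τ m ∘ fill τ₀ m = fill τ m := by
  ext u i
  by_cases hi : m i <;> simp [fill, hi]

lemma fill_comp_fill_comm (τ : ∀ i, P i) (m k : ι → Bool) :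
    fill τ m ∘ fill τ k = fill τ k ∘ fill τ m := by
  ext u i
  by_cases hm : m i <;> by_cases hk : k i <;> simp [fill, hm, hk]

variable (R V : Type*) [CommRing R] [AddCommGroup V] [Module R V]

/-- The pushforward along `f_τ(·, m)` of a `V`-valued mass on data vectors. Masses are finitely
supported so that the feature sets `P i` need not be finite. -/
noncomputable def fillEnd (τ : ∀ i, P i) (m : ι → Bool) : Module.End R ((∀ i, P i) →₀ V) :=
  Finsupp.lmapDomain V R (fill τ m)

lemma fillEnd_mul_fillEnd_self (τ τ₀ : ∀ i, P i) (m : ι → Bool) :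
    fillEnd R V τ m * fillEnd R V τ₀ m = fillEnd R V τ m := by
  simp only [fillEnd, Module.End.mul_eq_comp, ← Finsupp.lmapDomain_comp, fill_comp_fill_self]

lemma isIdempotentElem_fillEnd (τ : ∀ i, P i) (m : ι → Bool) :
    IsIdempotentElem (fillEnd R V τ m) :=
  fillEnd_mul_fillEnd_self R V τ τ m

lemma commute_fillEnd (τ : ∀ i, P i) (m k : ι → Bool) :
    Commute (fillEnd R V τ m) (fillEnd R V τ k) := by
  simp only [commute_iff_eq, fillEnd, Module.End.mul_eq_comp, ← Finsupp.lmapDomain_comp,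
    fill_comp_fill_comm τ m k]

lemma ker_fillEnd_le (τ₀ τ : ∀ i, P i) (m : ι → Bool) :
    (fillEnd R V τ₀ m).ker ≤ (fillEnd R V τ m).ker := by
  rw [← fillEnd_mul_fillEnd_self R V τ τ₀ m, Module.End.mul_eq_comp]
  exact LinearMap.ker_le_ker_comp _ _

variable {R}

/-- The transition operator `T_{q,τ}` for finitely supported mask weights `q`, acting on
finitely supported `V`-valued masses. -/
noncomputable def maskTransition (q : (ι → Bool) →₀ R) (τ : ∀ i, P i) :
    Module.End R ((∀ i, P i) →₀ V) :=
  q.sum fun m c => c • fillEnd R V τ m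

variable {V}
variable [LinearOrder R] [IsStrictOrderedRing R] [Module.IsTorsionFree R V]

lemma ker_maskTransition {q : (ι → Bool) →₀ R} (hq : 0 ≤ q) (τ : ∀ i, P i) :
    (maskTransition V q τ).ker = ⨅ m ∈ q.support, (fillEnd R V τ m).ker :=
  ker_sum_smul_eq_iInf_ker (isIdempotentElem_fillEnd R V τ) (commute_fillEnd R V τ)
    fun m hm => (hq m).lt_of_ne' (Finsupp.mem_support_iff.mp hm)

lemma ker_maskTransition_le {q : (ι → Bool) →₀ R} (hq : 0 ≤ q) (τ₀ τ : ∀ i, P i) :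
    (maskTransition V q τ₀).ker ≤ (maskTransition V q τ).ker := by
  rw [ker_maskTransition hq, ker_maskTransition hq]
  exact iInf₂_mono fun m _ => ker_fillEnd_le R V τ₀ τ m

theorem stmt1_general {q : (ι → Bool) →₀ R} (hq : 0 ≤ q) (τ₀ τ : ∀ i, P i)
    {x₁ x₂ : (∀ i, P i) →₀ V} (h : maskTransition V q τ₀ x₁ = maskTransition V q τ₀ x₂) :
    maskTransition V q τ x₁ = maskTransition V q τ x₂ :=
  LinearMap.sub_mem_ker_iff.mp <| ker_maskTransition_le hq τ₀ τ <| LinearMap.sub_mem_ker_iff.mpr h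

end Masking

lemma T_eq_maskTransition {n : ℕ} {P : Type*} [Fintype P] [DecidableEq P]
    (q : (Fin n → Bool) → ℝ) (τ : P) (x : (Fin n → P) → ℝ) :
    T q τ x = maskTransition ℝ (Finsupp.equivFunOnFinite.symm q) (fun _ => τ)
      (Finsupp.equivFunOnFinite.symm x) := by
  ext v
  change ∑ m, ∑ u, q m * x u * (if fill (fun _ => τ) m u = v then 1 else 0) = _
  simp [maskTransition, fillEnd, Finsupp.sum_fintype, Finsupp.mapDomain,
    Finsupp.finsetSum_apply, Finsupp.single_apply, Finset.mul_sum]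

/-- If `T_{q,τ₀} x₁ = T_{q,τ₀} x₂` for some fill value `τ₀`, then
`T_{q,τ} x₁ = T_{q,τ} x₂` for every fill value `τ`. -/
theorem stmt1 {n : ℕ} (hn : 1 ≤ n) {P : Type*} [Fintype P] [Nonempty P] [DecidableEq P]
    (q : (Fin n → Bool) → ℝ) (hq0 : ∀ m, 0 ≤ q m)
    (hq1 : (∑ m : Fin n → Bool, q m) = 1)
    (τ₀ τ : P) (x₁ x₂ : (Fin n → P) → ℝ)
    (h : T q τ₀ x₁ = T q τ₀ x₂) :
    T q τ x₁ = T q τ x₂ := by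
  simp only [T_eq_maskTransition, DFunLike.coe_fn_eq] at h ⊢
  exact stmt1_general hq0 _ _ h
end

section
/- Let q be a mask distribution on M and let p* : I → ℝ be nonnegative. For τ₀, τ₁ ∈ P, the constrained linear system T_{q,τ₀} p = T_{q,τ₀} p* has p* as its unique nonnegative solution (i.e., every nonnegative p : I → ℝ with T_{q,τ₀} p = T_{q,τ₀} p* satisfies p = p*) if and only if the same holds for τ₁. In other words, whether the true data distribution is uniquely recoverable from masked data is independent of the choice of the filled-in value τ. -/
/-!
Write `Π_m^τ` for the pushforward of functions on `I` along `u ↦ f_τ(u, m)`, so that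
`T_{q,τ} = ∑_m q(m) Π_m^τ`. For fixed `τ` these operators satisfy `Π_k Π_m = Π_{k ⊓ m}`.

If `T_{q,τ} x = 0`, then `Π_k^τ x = 0` for every `k` below a mask of positive weight, by induction
on `k`: in `0 = Π_k T x = ∑_m q(m) Π_{k ⊓ m} x` the terms with `k ⊓ m < k` vanish by induction, and
the others add up to `(∑_{m ≥ k} q(m)) Π_k x`, whose coefficient is positive. Hence the kernel of
`T_{q,τ}` is the intersection of the kernels of the `Π_m^τ` with `q(m) ≠ 0`. None of these depends
on `τ`, since `Π_m^σ = Π_m^σ Π_m^τ`: refilling the masked coordinates forgets the first fill-in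
value.
-/

open Finset
open scoped Classical

section MeetSemilattice

variable {L R V : Type*} [Fintype L] [SemilatticeInf L]
  [CommSemiring R] [IsDomain R] [PartialOrder R] [IsOrderedAddMonoid R]
  [AddCommMonoid V] [Module R V] [Module.IsTorsionFree R V]

lemma apply_eq_zero_of_sum_smul_apply_eq_zero_s2 {A : L → V →ₗ[R] V}
    (hA : ∀ k m, A k ∘ₗ A m = A (k ⊓ m)) {q : L → R} (hq : ∀ m, 0 ≤ q m) {x : V}
    (hx : ∑ m, q m • A m x = 0) {m : L} (hm : q m ≠ 0) {k : L} (hk : k ≤ m) : A k x = 0 := by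
  induction k using WellFoundedLT.induction with
  | ind k ih =>
    have term_of_not_le (l : L) (hl : ¬k ≤ l) : A (k ⊓ l) x = 0 :=
      ih (k ⊓ l) (inf_lt_left.mpr hl) (inf_le_left.trans hk)
    have hsum : (∑ l with k ≤ l, q l) • A k x = 0 := calc
      (∑ l with k ≤ l, q l) • A k x = ∑ l, q l • A (k ⊓ l) x := by
        rw [sum_smul, sum_filter]
        refine sum_congr rfl fun l _ => ?_
        split_ifs with hl
        · rw [inf_eq_left.mpr hl]
        · rw [term_of_not_le l hl, smul_zero]
      _ = A k (∑ l, q l • A l x) := by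
        simp only [map_sum, map_smul, ← hA, LinearMap.comp_apply]
      _ = 0 := by rw [hx, map_zero]
    have hpos : 0 < ∑ l with k ≤ l, q l := calc
      0 < q m := (hq m).lt_of_ne' hm
      _ ≤ ∑ l with k ≤ l, q l := single_le_sum (fun l _ => hq l) ((mem_filter_univ m).mpr hk)
    exact (smul_eq_zero.mp hsum).resolve_left hpos.ne'

lemma ker_sum_smul_eq_iInf_ker_s2 {A : L → V →ₗ[R] V} (hA : ∀ k m, A k ∘ₗ A m = A (k ⊓ m))
    {q : L → R} (hq : ∀ m, 0 ≤ q m) :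
    LinearMap.ker (∑ m, q m • A m) = ⨅ (m) (_ : q m ≠ 0), LinearMap.ker (A m) := by
  ext x
  simp only [LinearMap.mem_ker, Submodule.mem_iInf, LinearMap.sum_apply, LinearMap.smul_apply]
  refine ⟨fun hx m hm => apply_eq_zero_of_sum_smul_apply_eq_zero_s2 hA hq hx hm le_rfl,
    fun hx => sum_eq_zero fun m _ => ?_⟩
  exact smul_eq_zero.mpr (or_iff_not_imp_left.mpr (hx m))

end MeetSemilattice

section Masking

variable {ι : Type*} {P : ι → Type*}

lemma maskFill_comp_same_fill (τ : ∀ i, P i) (k m : ι → Bool) :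
    maskFill τ k ∘ maskFill τ m = maskFill τ (k ⊓ m) := by
  ext u i
  by_cases hk : k i <;> by_cases hm : m i <;> simp [maskFill, hk, hm]

lemma maskFill_comp_same_mask (σ τ : ∀ i, P i) (m : ι → Bool) :
    maskFill σ m ∘ maskFill τ m = maskFill σ m := by
  ext u i
  by_cases hm : m i <;> simp [maskFill, hm]

variable [∀ i, Finite (P i)] {R : Type*} [CommSemiring R]

lemma ker_linearMap_maskFill_le [Finite ι] (σ τ : ∀ i, P i) (m : ι → Bool) :
    LinearMap.ker (FunOnFinite.linearMap R R (maskFill τ m)) ≤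
      LinearMap.ker (FunOnFinite.linearMap R R (maskFill σ m)) := by
  rw [← maskFill_comp_same_mask σ τ m, FunOnFinite.linearMap_comp]
  exact LinearMap.ker_le_ker_comp _ _

variable [Fintype ι] [DecidableEq ι]

/-- The transition operator `T_{q,τ}` as a linear map: the `q`-weighted sum over all masks of the
pushforwards along the masking operators. -/
noncomputable def transition (q : (ι → Bool) → R) (τ : ∀ i, P i) :
    ((∀ i, P i) → R) →ₗ[R] ((∀ i, P i) → R) :=
  ∑ m, q m • FunOnFinite.linearMap R R (maskFill τ m)

variable [IsDomain R] [PartialOrder R] [IsOrderedAddMonoid R]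

lemma ker_transition {q : (ι → Bool) → R} (hq : ∀ m, 0 ≤ q m) (τ : ∀ i, P i) :
    LinearMap.ker (transition q τ) =
      ⨅ (m) (_ : q m ≠ 0), LinearMap.ker (FunOnFinite.linearMap R R (maskFill τ m)) :=
  ker_sum_smul_eq_iInf_ker_s2
    (fun k m => by rw [← FunOnFinite.linearMap_comp, maskFill_comp_same_fill]) hq

lemma ker_transition_eq_ker_transition {q : (ι → Bool) → R} (hq : ∀ m, 0 ≤ q m)
    (σ τ : ∀ i, P i) : LinearMap.ker (transition q σ) = LinearMap.ker (transition q τ) := by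
  have ker_eq (m : ι → Bool) : LinearMap.ker (FunOnFinite.linearMap R R (maskFill σ m)) =
      LinearMap.ker (FunOnFinite.linearMap R R (maskFill τ m)) :=
    (ker_linearMap_maskFill_le τ σ m).antisymm (ker_linearMap_maskFill_le σ τ m)
  simp only [ker_transition hq, ker_eq]

end Masking

lemma T_eq_transition {n : ℕ} {P : Type*} [Fintype P] [DecidableEq P]
    (q : (Fin n → Bool) → ℝ) (τ : P) (x : (Fin n → P) → ℝ) :
    T q τ x = transition q (fun _ => τ) x := by
  ext v
  simp only [T, transition, LinearMap.sum_apply, LinearMap.smul_apply, Finset.sum_apply,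
    Pi.smul_apply, FunOnFinite.linearMap_apply_apply, sum_filter, smul_eq_mul, mul_sum, mul_ite,
    mul_one, mul_zero]
  rfl

theorem stmt2_general {ι : Type*} [Fintype ι] [DecidableEq ι] {P : ι → Type*} [∀ i, Finite (P i)]
    {R : Type*} [CommRing R] [IsDomain R] [PartialOrder R] [IsOrderedAddMonoid R]
    {q : (ι → Bool) → R} (hq : ∀ m, 0 ≤ q m) (σ τ : ∀ i, P i) (x y : (∀ i, P i) → R) :
    transition q σ x = transition q σ y ↔ transition q τ x = transition q τ y := by
  rw [← LinearMap.sub_mem_ker_iff, ker_transition_eq_ker_transition hq σ τ,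
    LinearMap.sub_mem_ker_iff]

/-- Unique recoverability of a nonnegative data distribution from masked data
is independent of the choice of the filled-in value `τ`. -/
theorem stmt2 {n : ℕ} (hn : 1 ≤ n) {P : Type*} [Fintype P] [Nonempty P] [DecidableEq P]
    (q : (Fin n → Bool) → ℝ) (hq0 : ∀ m, 0 ≤ q m)
    (hq1 : (∑ m : Fin n → Bool, q m) = 1)
    (τ₀ τ₁ : P) (pstar : (Fin n → P) → ℝ) (hpstar : ∀ s, 0 ≤ pstar s) :
    (∀ p : (Fin n → P) → ℝ, (∀ s, 0 ≤ p s) → T q τ₀ p = T q τ₀ pstar → p = pstar) ↔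
    (∀ p : (Fin n → P) → ℝ, (∀ s, 0 ≤ p s) → T q τ₁ p = T q τ₁ pstar → p = pstar) := by
  simp only [T_eq_transition, stmt2_general hq0 (fun _ => τ₀) (fun _ => τ₁)]
end

section
/- (Proposition 1) Let q be a mask distribution on M with support S_q = {m ∈ M : q(m) > 0}. If x₁, x₂ : I → ℝ have the same marginals on all supported masks, i.e., x₁([v]_m) = x₂([v]_m) for every v ∈ I and every m ∈ S_q, then T_{q,τ} x₁ = T_{q,τ} x₂ for every τ ∈ P. -/
/-!
The preimage of `v` under `f_τ(·, m)` is the whole class `[v]_m` if `v` is fixed by `f_τ(·, m)`, and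
is empty otherwise. So each mask `m` contributes to `T q τ x v` either `q m * x([v]_m)` or nothing,
and `x` enters only through its marginals on the masks with nonzero weight.
-/

open Finset
open scoped Classical

/-- The masking operator `f_τ(s, m)`, written inline in the definition of `T`: it keeps the
coordinates of `s` observed by `m` and replaces the others by `τ`. -/
def applyMask {ι P : Type*} (τ : P) (s : ι → P) (m : ι → Bool) : ι → P :=
  fun d => if m d then s d else τ

lemma applyMask_eq_iff {ι P : Type*} {τ : P} {u v : ι → P} {m : ι → Bool} :
    applyMask τ u m = v ↔ applyMask τ v m = v ∧ ∀ d, m d = true → v d = u d := by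
  simp only [applyMask, funext_iff, ← forall_and]
  refine forall_congr' fun d => ?_
  cases m d <;> simp [eq_comm]

section Transition

variable {n : ℕ} {P : Type*} [Fintype P] [DecidableEq P]

lemma sum_ite_applyMask_eq (τ : P) (x : (Fin n → P) → ℝ) (m : Fin n → Bool) (v : Fin n → P) :
    (∑ u, if applyMask τ u m = v then x u else 0) =
      if applyMask τ v m = v then marg x m v else 0 := by
  split_ifs with hv
  · exact sum_congr rfl fun u _ => if_congr (applyMask_eq_iff.trans (and_iff_right hv)) rfl rfl
  · exact sum_eq_zero fun u _ => if_neg fun hu => hv (applyMask_eq_iff.mp hu).1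

lemma T_apply_eq_sum_marg (q : (Fin n → Bool) → ℝ) (τ : P) (x : (Fin n → P) → ℝ)
    (v : Fin n → P) :
    T q τ x v = ∑ m with applyMask τ v m = v, q m * marg x m v :=
  calc T q τ x v = ∑ m, ∑ u, q m * x u * if applyMask τ u m = v then 1 else 0 := rfl
    _ = ∑ m, q m * ∑ u, if applyMask τ u m = v then x u else 0 := by
        simp only [mul_sum, mul_ite, mul_one, mul_zero]
    _ = ∑ m, q m * if applyMask τ v m = v then marg x m v else 0 := by
        simp only [sum_ite_applyMask_eq]
    _ = ∑ m with applyMask τ v m = v, q m * marg x m v := by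
        simp only [mul_ite, mul_zero, sum_filter]

theorem stmt3_general (q : (Fin n → Bool) → ℝ) (x₁ x₂ : (Fin n → P) → ℝ)
    (h : ∀ (v : Fin n → P) (m : Fin n → Bool), q m ≠ 0 → marg x₁ m v = marg x₂ m v) (τ : P) :
    T q τ x₁ = T q τ x₂ := by
  funext v
  simp only [T_apply_eq_sum_marg]
  refine sum_congr rfl fun m _ => ?_
  rcases eq_or_ne (q m) 0 with hm | hm
  · rw [hm, zero_mul, zero_mul]
  · rw [h v m hm]

end Transition

/-- Proposition 1: equal marginals on all supported masks determine `T_{q,τ} x`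
for every `τ`. -/
theorem stmt3 {n : ℕ} (hn : 1 ≤ n) {P : Type*} [Fintype P] [Nonempty P] [DecidableEq P]
    (q : (Fin n → Bool) → ℝ) (hq0 : ∀ m, 0 ≤ q m)
    (hq1 : (∑ m : Fin n → Bool, q m) = 1)
    (x₁ x₂ : (Fin n → P) → ℝ)
    (h : ∀ (v : Fin n → P) (m : Fin n → Bool), 0 < q m → marg x₁ m v = marg x₂ m v)
    (τ : P) :
    T q τ x₁ = T q τ x₂ :=
  stmt3_general q x₁ x₂ (fun v m hm => h v m ((hq0 m).lt_of_ne' hm)) τ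
end

section
/- Let q be a mask distribution on M and suppose the all-ones mask 𝟙 (the mask with m_d = 1 for every d) satisfies q(𝟙) > 0. Then for every τ ∈ P the transition operator T_{q,τ} is injective; equivalently, the linear system T_{q,τ} p = T_{q,τ} p* has p* as its unique solution, so the data distribution is uniquely recoverable. -/
/-!
Masking overwrites coordinates by `τ` and never undoes it, so a vector that is changed by a mask
gains `τ`-coordinates. Hence `T q τ` is triangular with respect to inclusion of the sets of
`τ`-coordinates. Its diagonal entry at `v` is the probability that every coordinate of `v` different
from `τ` is observed, which is at least `q 𝟙 > 0`, and a triangular system with cancellable diagonal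
entries is solved uniquely by forward substitution.
-/

open Finset
open scoped Classical

section Triangular

variable {α β R : Type*} [Fintype α] [LT β] [WellFoundedLT β]
  [NonUnitalNonAssocSemiring R] [IsRightCancelAdd R]

theorem mulVec_injective_of_triangular {A : Matrix α α R} (r : α → β)
    (hA : ∀ v u, u ≠ v → A v u ≠ 0 → r u < r v) (hdiag : ∀ v, IsLeftRegular (A v v)) :
    Function.Injective A.mulVec := by
  intro x y hxy
  funext v
  induction v using (InvImage.wf r wellFounded_lt).induction with
  | _ v ih =>
    have off_diag : ∑ u ∈ univ.erase v, A v u * x u = ∑ u ∈ univ.erase v, A v u * y u := by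
      refine sum_congr rfl fun u hu => ?_
      by_cases h0 : A v u = 0
      · simp only [h0, zero_mul]
      · rw [ih u (hA v u (ne_of_mem_erase hu) h0)]
    have row : ∑ u, A v u * x u = ∑ u, A v u * y u := congrFun hxy v
    rw [← add_sum_erase _ _ (mem_univ v), ← add_sum_erase univ (fun u => A v u * y u) (mem_univ v),
      off_diag] at row
    exact hdiag v (add_right_cancel row)

end Triangular

section Mask

variable {ι P : Type*} {τ : P} {m : ι → Bool} {u v : ι → P}

/-- The masking operator `f_τ(u, m)`, which keeps the coordinates observed by `m` and fills the
others with `τ`. The mask precedes the vector so that `mask τ m` is a map on vectors, and the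
coordinates may be indexed by any type. -/
def mask (τ : P) (m : ι → Bool) (u : ι → P) : ι → P :=
  fun d => if m d then u d else τ

theorem mask_apply_eq_or (τ : P) (m : ι → Bool) (u : ι → P) (d : ι) :
    mask τ m u d = u d ∨ mask τ m u d = τ :=
  ite_eq_or_eq _ _ _

theorem setOf_eq_ssubset_setOf_mask_eq (h : mask τ m u ≠ u) :
    {d | u d = τ} ⊂ {d | mask τ m u d = τ} := by
  have hsub : {d | u d = τ} ⊆ {d | mask τ m u d = τ} := fun d hd =>
    (mask_apply_eq_or τ m u d).elim (·.trans hd) id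
  obtain ⟨d, hd⟩ := Function.ne_iff.1 h
  have hmask : mask τ m u d = τ := (mask_apply_eq_or τ m u d).resolve_left hd
  exact (Set.ssubset_iff_of_subset hsub).2 ⟨d, hmask, fun hu => hd (hmask.trans hu.symm)⟩

theorem mask_eq_self_iff [DecidableEq P] :
    mask τ m v = v ↔ (fun d => decide (v d ≠ τ)) ≤ m := by
  simp only [funext_iff, mask, Pi.le_def, Bool.le_iff_imp, decide_eq_true_eq, ite_eq_left_iff]
  exact forall_congr' fun d => by rw [← not_imp_comm, eq_comm]

end Mask

section Transition

variable {ι P R : Type*} [Fintype ι] [DecidableEq ι] [DecidableEq P]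

/-- The matrix of the transition operator `T_{q,τ}`: its entry in row `v` and column `u` is the
`q`-mass of the masks `m` with `f_τ(u, m) = v`. The weights `q` need not be
probabilities. -/
def transitionMatrix [AddCommMonoid R] (q : (ι → Bool) → R) (τ : P) : Matrix (ι → P) (ι → P) R :=
  fun v u => ∑ m with mask τ m u = v, q m

theorem setOf_eq_ssubset_of_transitionMatrix_ne_zero [AddCommMonoid R] {q : (ι → Bool) → R}
    {τ : P} {u v : ι → P} (hne : u ≠ v) (h : transitionMatrix q τ v u ≠ 0) :
    {d | u d = τ} ⊂ {d | v d = τ} := by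
  obtain ⟨m, hm, -⟩ := exists_ne_zero_of_sum_ne_zero h
  obtain rfl : mask τ m u = v := (mem_filter.1 hm).2
  exact setOf_eq_ssubset_setOf_mask_eq hne.symm

theorem transitionMatrix_apply_self [AddCommMonoid R] (q : (ι → Bool) → R) (τ : P) (v : ι → P) :
    transitionMatrix q τ v v = ∑ m with (fun d => decide (v d ≠ τ)) ≤ m, q m :=
  sum_congr (filter_congr fun _ _ => mask_eq_self_iff) fun _ _ => rfl

theorem stmt9_general [Fintype P] [NonUnitalNonAssocSemiring R] [IsRightCancelAdd R]
    (q : (ι → Bool) → R) (hq : ∀ s : ι → Bool, IsLeftRegular (∑ m with s ≤ m, q m)) (τ : P) :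
    Function.Injective (transitionMatrix q τ).mulVec :=
  mulVec_injective_of_triangular (fun v => {d | v d = τ})
    (fun _ _ => setOf_eq_ssubset_of_transitionMatrix_ne_zero)
    fun v => transitionMatrix_apply_self q τ v ▸ hq _

end Transition

theorem T_eq_mulVec {n : ℕ} {P : Type*} [Fintype P] [DecidableEq P] (q : (Fin n → Bool) → ℝ)
    (τ : P) : T q τ = (transitionMatrix q τ).mulVec := by
  funext x v
  simp only [T, Matrix.mulVec, dotProduct, transitionMatrix, sum_mul, sum_filter, mul_ite,
    ite_mul, mul_one, mul_zero, zero_mul]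
  exact sum_comm

theorem sum_filter_le_pos {α M : Type*} [Fintype α] [LE α] [OrderTop α] [DecidableLE α]
    [AddCommMonoid M] [PartialOrder M] [IsOrderedCancelAddMonoid M] {f : α → M}
    (hf : ∀ b, 0 ≤ f b) (htop : 0 < f ⊤) (a : α) : 0 < ∑ b with a ≤ b, f b :=
  sum_pos' (fun b _ => hf b) ⟨⊤, mem_filter.2 ⟨mem_univ _, le_top⟩, htop⟩

/-- If the all-ones mask has positive probability, then `T_{q,τ}` is injective
for every `τ`; equivalently the system `T_{q,τ} p = T_{q,τ} p*` has `p*` as its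
unique solution. -/
theorem stmt9 {n : ℕ} (hn : 1 ≤ n) {P : Type*} [Fintype P] [Nonempty P] [DecidableEq P]
    (q : (Fin n → Bool) → ℝ) (hq0 : ∀ m, 0 ≤ q m)
    (hq1 : (∑ m : Fin n → Bool, q m) = 1)
    (hfull : 0 < q (fun _ => true)) (τ : P) :
    Function.Injective (T q τ) ∧
      ∀ pstar p : (Fin n → P) → ℝ, T q τ p = T q τ pstar → p = pstar := by
  have hinj : Function.Injective (T q τ) := T_eq_mulVec q τ ▸ stmt9_general q
    (fun s => (IsRegular.of_ne_zero (sum_filter_le_pos hq0 hfull s).ne').left) τ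
  exact ⟨hinj, fun _ _ h => hinj h⟩
end
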